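/- arXiv:2401.15671 — 4 statements merged into one kernel-verified Lean document; each statement's English description precedes it below -/
import Mathlib

section
/- Let R be a commutative ring and let v_1, ..., v_m be nonzero elements of R such that each Ann(v_i) is a maximal orthogonal ideal and the ideals Ann(v_1), ..., Ann(v_m) are pairwise distinct. Then the ideals Ann(v_1), ..., Ann(v_m) are independent: for every index k, the intersection ⋂_{i ≠ k} Ann(v_i) is not contained in Ann(v_k). -/
/-- The annihilator ideal of an element `v`: `{x | v * x = 0}`. -/
def ann {R : Type*} [CommRing R] (v : R) : Ideal R where
  carrier := {x | v * x = 0}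
  add_mem' := by
    intro a b ha hb
    simp only [Set.mem_setOf_eq] at *
    rw [mul_add, ha, hb, add_zero]
  zero_mem' := by simp
  smul_mem' := by
    intro c x hx
    simp only [Set.mem_setOf_eq, smul_eq_mul] at *
    rw [mul_comm c x, ← mul_assoc, hx, zero_mul]

/-- Pairwise distinct maximal orthogonal ideals are independent. -/
theorem maximal_annihilators_independent {R : Type*} [CommRing R] {m : ℕ}
    (v : Fin m → R) (hv : ∀ i, v i ≠ 0)
    (hmax : ∀ i, ∀ w : R, w ≠ 0 → ann (v i) ≤ ann w → ann (v i) = ann w)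
    (hdist : ∀ i k, i ≠ k → ann (v i) ≠ ann (v k)) :
    ∀ k, ¬ (⨅ i : {i : Fin m // i ≠ k}, ann (v i.1)) ≤ ann (v k) := by
  intro k hle
  have mem : ∀ w x : R, x ∈ ann w ↔ w * x = 0 := fun w x => Iff.rfl
  have hp : (ann (v k)).IsPrime := by
    refine ⟨fun h => hv k ?_, fun {x y} hxy => ?_⟩
    · have h1 : (1 : R) ∈ ann (v k) := by rw [h]; trivial
      simpa [mem] using h1
    · by_contra! hc
      obtain ⟨hx, hy⟩ := hc
      have heq := hmax k (v k * x) (fun h => hx ((mem _ _).2 h)) (fun z hz => by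
        rw [mem] at hz ⊢
        rw [mul_right_comm, hz, zero_mul])
      apply hy
      rw [heq, mem, mul_assoc]
      exact (mem _ _).1 hxy
  have h2 : (Finset.univ : Finset {i : Fin m // i ≠ k}).inf (fun i => ann (v i.1)) ≤ ann (v k) := by
    rw [Finset.inf_univ_eq_iInf]
    exact hle
  obtain ⟨i, -, hi⟩ := (Ideal.IsPrime.inf_le' hp).1 h2
  exact hdist i.1 k i.2 (hmax i.1 (v k) (hv k) hi)
end

section
/- (Regular Element Property, Kaplansky) Let R be a commutative Noetherian ring and let I = ⟨a_1, ..., a_n⟩ be a finitely generated ideal of R that is regular, i.e., for every nonzero v ∈ R there exists a ∈ I with v·a ≠ 0. Then I contains a regular element, i.e., there exists a ∈ I such that for all v ∈ R, v·a = 0 implies v = 0. -/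
/-- Regular Element Property (Kaplansky): in a commutative Noetherian ring, every
finitely generated regular ideal contains a regular element. -/
theorem regular_element_property {R : Type*} [CommRing R] [IsNoetherianRing R]
    {n : ℕ} (a : Fin n → R) (I : Ideal R) (hI : I = Ideal.span (Set.range a))
    (hreg : ∀ v : R, v ≠ 0 → ∃ x ∈ I, v * x ≠ 0) :
    ∃ x ∈ I, ∀ v : R, v * x = 0 → v = 0 := by
  by_contra! hcon
  obtain ⟨P, hP, hle⟩ :=
    (I.subset_union_prime_finite (associatedPrimes.finite R R) (f := id) 0 0
      fun _ h _ _ ↦ h.1).1 <| by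
      simp only [id]
      rw [biUnion_associatedPrimes_eq_zero_divisors R R]
      intro x hx
      obtain ⟨v, hv, hv0⟩ := hcon x hx
      exact ⟨v, hv0, by rw [smul_eq_mul, mul_comm, hv]⟩
  rw [AssociatedPrimes.mem_iff, isAssociatedPrime_iff] at hP
  obtain ⟨prime, v, rfl⟩ := hP
  obtain ⟨x, hx, hne⟩ := hreg v fun h ↦ prime.ne_top <| by simp [h]
  have h := hle hx
  rw [id, Submodule.mem_colon_singleton, Submodule.mem_bot, smul_eq_mul, mul_comm] at h
  exact hne h
end

section
/- Let R be a commutative Noetherian ring. Define a relation ≺ on finite lists of elements of R by: (v_1, ..., v_n) ≺ (w_1, ..., w_m) if and only if m ≤ n, v_i = w_i for all i < m, and Ann(v_m) is strictly contained in Ann(w_m). Then ≺ is well-founded, in the sense that there is no infinite sequence of lists α_0 ≺ α_1 ≺ α_2 ≺ ⋯ (equivalently, every list is accessible for the relation in which the successors of α are the lists β with α ≺ β). -/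
/-- The relation `α ≺ β` on finite lists: `β = (w_1, ..., w_m)` with `m ≤ length α`,
`w_i = v_i` for `i < m`, and `ann v_m ⊊ ann w_m`, i.e. `α = γ ++ v :: δ`,
`β = γ ++ [w]` with `ann v ⊊ ann w`. -/
def Prec {R : Type*} [CommRing R] (α β : List R) : Prop :=
  ∃ (γ δ : List R) (v w : R), α = γ ++ v :: δ ∧ β = γ ++ [w] ∧ ann v < ann w

/-- In a commutative Noetherian ring, the relation `≺` is well-founded: every list is
accessible for the relation whose successors of `α` are the lists `β` with `α ≺ β`. -/
theorem prec_wellFounded {R : Type*} [CommRing R] [IsNoetherianRing R] :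
    WellFounded (fun β α : List R => Prec α β) := by
  constructor
  intro α
  induction α using List.reverseRecOn with
  | nil =>
    constructor
    rintro β ⟨γ, δ, v, w, h, -, -⟩
    simp at h
  | append_singleton l a ih =>
    have key : ∀ I : Ideal R, ∀ a : R, ann a = I →
        Acc (fun β α : List R => Prec α β) (l ++ [a]) := by
      intro I
      induction I using WellFoundedGT.induction with
      | ind I IH =>
        intro a ha
        constructor
        rintro β ⟨γ, δ, v, w, h, rfl, hlt⟩
        rcases List.eq_nil_or_concat δ with rfl | ⟨δ', x, rfl⟩
        · obtain ⟨rfl, h2⟩ := List.append_inj' h rfl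
          have h3 : a = v := by simpa using h2
          subst h3
          exact IH _ (ha ▸ hlt) w rfl
        · have h' : l ++ [a] = (γ ++ v :: δ') ++ [x] := by simpa using h
          obtain ⟨h1, -⟩ := List.append_inj' h' rfl
          exact ih.inv ⟨γ, δ', v, w, h1, rfl, hlt⟩
    exact key _ a rfl
end

section
/- Let R be a commutative Noetherian ring and let α be a non-decreasing finite list of nonzero elements of R (i.e., Ann(v_i) ⊆ Ann(v_j) implies i ≤ j). Then there exists an independent list β of nonzero elements of R such that α ≺* β, where ≺* is the reflexive-transitive closure of the relation ≺. -/
/-- A list is independent if for each position `k`, the intersection of the annihilators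
of the other entries is not contained in the annihilator of the `k`-th entry. -/
def IndepList {R : Type*} [CommRing R] (l : List R) : Prop :=
  ∀ k : Fin l.length,
    ¬ (⨅ i : {i : Fin l.length // i ≠ k}, ann (l.get i.1)) ≤ ann (l.get k)

theorem mem_ann_iff {R : Type*} [CommRing R] (v x : R) : x ∈ ann v ↔ v * x = 0 := Iff.rfl

theorem acc_prec {R : Type*} [CommRing R] [IsNoetherianRing R] (l : List R) :
    Acc (fun a b : List R => Prec b a) l := by
  induction l with
  | nil =>
    refine ⟨_, ?_⟩
    rintro y ⟨γ, δ, v, w, h, -, -⟩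
    simp at h
  | cons v δ ih =>
    have wf : WellFounded (fun a b : R => ann a > ann b) :=
      InvImage.wf (fun a : R => ann a) (wellFounded_gt : WellFounded (α := Ideal R) (· > ·))
    induction v using wf.induction generalizing δ with
    | _ v ihv =>
    induction ih with
    | intro δ _ ihδ =>
    refine ⟨_, ?_⟩
    rintro y ⟨γ, ε, a, w, h, rfl, hlt⟩
    cases γ with
    | nil =>
      simp at h
      obtain ⟨rfl, rfl⟩ := h
      refine ihv w hlt [] ⟨_, ?_⟩
      rintro y ⟨γ, δ, v, w, h, -, -⟩
      simp at h
    | cons b γ =>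
      simp at h
      obtain ⟨rfl, rfl⟩ := h
      exact ihδ (γ ++ [w]) ⟨γ, ε, a, w, rfl, rfl, hlt⟩

theorem exists_indep_aux {R : Type*} [CommRing R] [IsNoetherianRing R]
    (α : List R) (hα0 : ∀ x ∈ α, x ≠ 0)
    (hnd : α.Pairwise (fun a b => ¬ ann b ≤ ann a)) :
    ∃ β : List R, (∀ x ∈ β, x ≠ 0) ∧ IndepList β ∧ Relation.ReflTransGen Prec α β := by
  induction acc_prec α with
  | intro α _ ih =>
  by_cases hI : IndepList α
  · exact ⟨α, hα0, hI, .refl⟩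
  -- it suffices to move one step up
  have key : ∀ (γ δ : List R) (v w : R), α = γ ++ v :: δ → w ≠ 0 → ann v < ann w →
      ∃ β : List R, (∀ x ∈ β, x ≠ 0) ∧ IndepList β ∧ Relation.ReflTransGen Prec α β := by
    intro γ δ v w h hw hlt
    have hp : Prec α (γ ++ [w]) := ⟨γ, δ, v, w, h, rfl, hlt⟩
    obtain ⟨β, h1, h2, h3⟩ := ih (γ ++ [w]) hp
      (by
        intro x hx
        rcases List.mem_append.1 hx with hx | hx
        · exact hα0 x (by simp [h, hx])
        · simp at hx; rwa [hx])
      (by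
        subst h
        rw [List.pairwise_append] at hnd ⊢
        refine ⟨hnd.1, by simp, ?_⟩
        intro a ha b hb hle
        simp at hb
        subst hb
        exact hnd.2.2 a ha v (by simp) (hlt.le.trans hle))
    exact ⟨β, h1, h2, .head hp h3⟩
  have split : ∀ i : Fin α.length, α = α.take i ++ α.get i :: α.drop (i + 1) := by
    intro i
    simp
  by_contra hcon
  unfold IndepList at hI
  push Not at hI
  obtain ⟨k, hk⟩ := hI
  have hk0 : α.get k ≠ 0 := hα0 _ (List.get_mem _ _)
  have hprime : (ann (α.get k)).IsPrime := by
    constructor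
    · intro h
      have : (1 : R) ∈ ann (α.get k) := by rw [h]; trivial
      rw [mem_ann_iff, mul_one] at this
      exact hk0 this
    · intro x y hxy
      by_contra hno
      push Not at hno
      obtain ⟨hx, hy⟩ := hno
      refine hcon (key _ _ _ (α.get k * x) (split k) hx (lt_of_le_of_ne ?_ ?_))
      · intro z hz
        rw [mem_ann_iff] at hz ⊢
        rw [mul_right_comm, hz, zero_mul]
      · intro he
        apply hy
        rw [he, mem_ann_iff, mul_assoc]
        exact hxy
  have hex : ∃ i : {i : Fin α.length // i ≠ k}, ann (α.get i.1) ≤ ann (α.get k) := by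
    classical
    rw [← Finset.inf_univ_eq_iInf] at hk
    obtain ⟨i, -, hi⟩ := (hprime.inf_le').1 hk
    exact ⟨i, hi⟩
  obtain ⟨⟨i, hik⟩, hi⟩ := hex
  rw [List.pairwise_iff_get] at hnd
  have hlt : i < k := by
    rcases lt_trichotomy i k with h | h | h
    · exact h
    · exact absurd h hik
    · exact absurd hi (hnd k i h)
  exact hcon (key _ _ _ (α.get k) (split i) hk0 (lt_of_le_not_ge hi (hnd i k hlt)))

/-- In a commutative Noetherian ring, every non-decreasing list of nonzero elements
is related by `≺*` to an independent list of nonzero elements. -/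
theorem exists_independent_above {R : Type*} [CommRing R] [IsNoetherianRing R]
    (α : List R) (hα0 : ∀ x ∈ α, x ≠ 0)
    (hnd : ∀ i j : Fin α.length, ann (α.get i) ≤ ann (α.get j) → (i : ℕ) ≤ j) :
    ∃ β : List R, (∀ x ∈ β, x ≠ 0) ∧ IndepList β ∧ Relation.ReflTransGen Prec α β := by
  refine exists_indep_aux α hα0 (List.pairwise_iff_get.2 ?_)
  intro i j hij hle
  exact absurd (hnd j i hle) (not_le.2 hij)
end
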